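/- Let A, B be n×n complex positive definite matrices and p ∈ ℝ. Suppose one of the following holds: (1) A ⪯ B and p ≥ 1; (2) A ≤ B (Loewner) and p ≥ 0; (3) log A ≤ log B (Loewner) and p ≥ 0. Then A^p ⪯ B^p and B^{-p} ⪯ A^{-p}. Moreover, the curve t ↦ A^p ◇_t B^p is monotonically increasing in the near order on t ∈ [0, ∞), the curve t ↦ B^{-p} ◇_t A^{-p} is monotonically increasing in the near order on t ∈ [0, ∞), and the curve t ↦ A^p ♮_t B^p is monotonically increasing in the near order on t ∈ ℝ. -/

import Mathlib

open scoped ComplexOrder Matrix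

noncomputable section

/-- Real power of a (positive definite) matrix via the continuous functional calculus. -/
def mpow {n : ℕ} (A : Matrix (Fin n) (Fin n) ℂ) (t : ℝ) : Matrix (Fin n) (Fin n) ℂ :=
  cfc (fun x : ℝ => x ^ t) A

/-- The matrix logarithm of a (positive definite) matrix via the continuous functional calculus. -/
def mlog {n : ℕ} (A : Matrix (Fin n) (Fin n) ℂ) : Matrix (Fin n) (Fin n) ℂ :=
  cfc Real.log A

/-- The metric geometric mean `A ♯ₜ B = A^{1/2} (A^{-1/2} B A^{-1/2})^t A^{1/2}`.
`A ♯ B` is `gmean A B (1/2)`. -/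
def gmean {n : ℕ} (A B : Matrix (Fin n) (Fin n) ℂ) (t : ℝ) : Matrix (Fin n) (Fin n) ℂ :=
  mpow A (1/2) * mpow (mpow A (-(1/2)) * B * mpow A (-(1/2))) t * mpow A (1/2)

/-- The Loewner order: `A ≤ B` iff `B - A` is positive semidefinite. -/
def LoewnerLE {n : ℕ} (A B : Matrix (Fin n) (Fin n) ℂ) : Prop :=
  (B - A).PosSemidef

/-- The near order: `A ⪯ B` iff `I ≤ A⁻¹ ♯ B` in the Loewner order. -/
def NearLE {n : ℕ} (A B : Matrix (Fin n) (Fin n) ℂ) : Prop :=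
  LoewnerLE 1 (gmean A⁻¹ B (1/2))

/-- The spectral geometric mean `A ♮ₜ B = (A⁻¹ ♯ B)^t A (A⁻¹ ♯ B)^t`. -/
def smean {n : ℕ} (A B : Matrix (Fin n) (Fin n) ℂ) (t : ℝ) : Matrix (Fin n) (Fin n) ℂ :=
  mpow (gmean A⁻¹ B (1/2)) t * A * mpow (gmean A⁻¹ B (1/2)) t

/-- The Wasserstein mean `A ◇ₜ B = [(1-t)I + t(A⁻¹ ♯ B)] A [(1-t)I + t(A⁻¹ ♯ B)]`. -/
def wmean {n : ℕ} (A B : Matrix (Fin n) (Fin n) ℂ) (t : ℝ) : Matrix (Fin n) (Fin n) ℂ :=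
  (((1 - t : ℝ) : ℂ) • (1 : Matrix (Fin n) (Fin n) ℂ) + ((t : ℝ) : ℂ) • gmean A⁻¹ B (1/2)) * A *
    (((1 - t : ℝ) : ℂ) • (1 : Matrix (Fin n) (Fin n) ℂ) + ((t : ℝ) : ℂ) • gmean A⁻¹ B (1/2))

/-- The arithmetic mean `A ∇ₜ B = (1-t)A + tB`. -/
def amean {n : ℕ} (A B : Matrix (Fin n) (Fin n) ℂ) (t : ℝ) : Matrix (Fin n) (Fin n) ℂ :=
  ((1 - t : ℝ) : ℂ) • A + ((t : ℝ) : ℂ) • B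

/-- The matrix absolute value `|X| = (XᴴX)^{1/2}`. -/
def matAbs {n : ℕ} (X : Matrix (Fin n) (Fin n) ℂ) : Matrix (Fin n) (Fin n) ℂ :=
  mpow (Xᴴ * X) (1/2)

/-- The eigenvalues of a Hermitian matrix listed in nonincreasing order:
`eigDesc hA i` is `λ_{i+1}(A)`, so `eigDesc hA 0 = λ₁(A) ≥ eigDesc hA 1 = λ₂(A) ≥ ⋯`. -/
def eigDesc {n : ℕ} {A : Matrix (Fin n) (Fin n) ℂ} (hA : A.IsHermitian) : Fin n → ℝ :=
  fun i => (hA.eigenvalues ∘ Tuple.sort hA.eigenvalues) i.rev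

/-!
Let `g = a⁻¹ ♯ b`. It solves the Riccati equation `g a g = b`, and by operator monotonicity of the
square root it dominates every `y ≥ 0` with `y a y ≤ b`. Hence `a ⪯ b` if and only if `y a y = b`
for some `y ≥ 1`, and near inequalities are proved by exhibiting such a `y`.

* Curves: `a ◇ₜ b` and `a ♮ₜ b` are of the form `f(g) a f(g)`, so the ratio of two values of `f` in
  the functional calculus of `g` is a suitable `y`.
* Powers `1 ≤ p ≤ 2`: put `z = a^{1/2} y`, so that `z* z = b` and `a ≤ z z*`. Furuta's identity
  `(z* z)^p = z* (z z*)^{p-1} z` and the Löwner–Heinz inequality give `y a^p y ≤ b^p`, with the same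
  `y`. Larger powers follow by repeated doubling.
* Logarithms: `(x^q - 1) / q → log x` as `q → 0⁺`, so if `log a + δ ≤ log b` with `δ > 0` then
  `a^q ≤ b^q` for small `q > 0`, and raising to the power `p / q ≥ 1` gives `a^p ⪯ b^p`. The case
  `δ = 0` is a limit of rescalings of `a`.
-/

section CStarAlgebra

open CFC Filter Ring Topology

variable {𝓐 : Type*} [CStarAlgebra 𝓐]

theorem unitary_conj_cfc (u : unitary 𝓐) {x : 𝓐} (hx : IsSelfAdjoint x) {f : ℝ → ℝ}
    (hf : ContinuousOn f (spectrum ℝ x)) :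
    u * cfc f x * star (u : 𝓐) = cfc f (u * x * star (u : 𝓐)) := by
  have hcont : Continuous (Unitary.conjStarAlgAut ℝ 𝓐 u) := by
    change Continuous fun y => (u : 𝓐) * y * star (u : 𝓐)
    fun_prop
  simpa only [Unitary.conjStarAlgAut_apply] using
    StarAlgHomClass.map_cfc (Unitary.conjStarAlgAut ℝ 𝓐 u) f x hf hcont hx (hx.conjugate _)

theorem cfc_one_sub_add_mul {g : 𝓐} (hg : IsSelfAdjoint g) (t : ℝ) :
    cfc (fun x : ℝ => 1 - t + t * x) g = (1 - t) • 1 + t • g := by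
  rw [cfc_const_add .., cfc_const_mul_id .., Algebra.algebraMap_eq_smul_one]

variable [PartialOrder 𝓐] [StarOrderedRing 𝓐] {a b g y z : 𝓐}

/-! ### Conjugation by square roots and real powers -/

theorem conjSqrt_nonneg (c : 𝓐) (ha : 0 ≤ a) : 0 ≤ conjSqrt c a := by
  simpa only [map_zero] using conjSqrt_monotone (c := c) ha

theorem conjSqrt_injective (ha : IsStrictlyPositive a) : Function.Injective (conjSqrt a) :=
  Function.LeftInverse.injective (g := conjSqrt a⁻¹ʳ) (conjSqrt_ringInverse_conjSqrt a · ha)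

theorem conjSqrt_conj (ha : 0 ≤ a) (y : 𝓐) :
    conjSqrt a (y * a * y) = conjSqrt a y * conjSqrt a y := by
  simp only [conjSqrt_apply]
  nth_rewrite 2 [← sqrt_mul_sqrt_self a]
  simp only [mul_assoc]

theorem continuousOn_rpow_spectrum (ha : IsStrictlyPositive a) (r : ℝ) :
    ContinuousOn (fun x : ℝ => x ^ r) (spectrum ℝ a) :=
  continuousOn_id.rpow_const fun _ hx => .inl (ha.spectrum_pos hx).ne'

theorem ringInverse_rpow (ha : IsStrictlyPositive a) (p : ℝ) : (a ^ p)⁻¹ʳ = a ^ (-p) := by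
  obtain rfl | hp := eq_or_ne p 0
  · rw [neg_zero, rpow_zero a, inverse_one]
  · exact inverse_rpow a p hp

theorem sqrt_ringInverse (ha : IsStrictlyPositive a) : sqrt a⁻¹ʳ = a ^ (-(1 / 2) : ℝ) := by
  have hinv : a⁻¹ʳ = a ^ (-1 : ℝ) := by rw [← ringInverse_rpow ha, rpow_one a]
  rw [hinv, sqrt_eq_rpow, rpow_rpow a _ _ (by norm_num), neg_one_mul]

theorem smul_rpow (ha : IsStrictlyPositive a) {c : ℝ} (hc : 0 < c) (p : ℝ) :
    (c • a) ^ p = c ^ p • a ^ p := by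
  have hcont : ContinuousOn (fun x : ℝ => x ^ p) ((fun x => c • x) '' spectrum ℝ a) := by
    rintro _ ⟨x, hx, rfl⟩
    have hne : c • x ≠ 0 := (mul_pos hc (ha.spectrum_pos hx)).ne'
    exact (Real.continuousAt_rpow_const _ _ (.inl hne)).continuousWithinAt
  rw [rpow_eq_cfc_real (smul_nonneg hc.le ha.nonneg), ← cfc_comp_smul c _ a hcont ha.isSelfAdjoint,
    rpow_eq_cfc_real ha.nonneg, ← cfc_smul _ _ a (continuousOn_rpow_spectrum ha p)]
  exact cfc_congr fun x hx => Real.mul_rpow hc.le (ha.spectrum_pos hx).le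

theorem unitary_conj_rpow (u : unitary 𝓐) (ha : IsStrictlyPositive a) (r : ℝ) :
    u * a ^ r * star (u : 𝓐) = (u * a * star (u : 𝓐)) ^ r := by
  rw [rpow_eq_cfc_real ha.nonneg, rpow_eq_cfc_real (star_right_conjugate_nonneg ha.nonneg _),
    unitary_conj_cfc u ha.isSelfAdjoint (continuousOn_rpow_spectrum ha r)]

theorem exists_unitary_mul_abs (hz : IsUnit z) : ∃ u : unitary 𝓐, z = u * CFC.abs z := by
  have habs : IsStrictlyPositive (CFC.abs z) :=
    (CStarAlgebra.isStrictlyPositive_iff_eq_star_mul_self.2 ⟨z, hz, rfl⟩).sqrt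
  have hinv : IsSelfAdjoint (CFC.abs z)⁻¹ʳ := habs.ringInverse.isSelfAdjoint
  have hunit : IsUnit (z * (CFC.abs z)⁻¹ʳ) := hz.mul habs.ringInverse.isUnit
  refine ⟨⟨z * (CFC.abs z)⁻¹ʳ, hunit.mem_unitary_iff_star_mul_self.2 ?_⟩, ?_⟩
  · calc star (z * (CFC.abs z)⁻¹ʳ) * (z * (CFC.abs z)⁻¹ʳ)
        = (CFC.abs z)⁻¹ʳ * (star z * z) * (CFC.abs z)⁻¹ʳ := by
          simp only [star_mul, hinv.star_eq, mul_assoc]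
      _ = ((CFC.abs z)⁻¹ʳ * CFC.abs z) * (CFC.abs z * (CFC.abs z)⁻¹ʳ) := by
          simp only [← CFC.abs_mul_abs, mul_assoc]
      _ = 1 := by
          rw [inverse_mul_cancel _ habs.isUnit, mul_inverse_cancel _ habs.isUnit, one_mul]
  · rw [mul_assoc, inverse_mul_cancel _ habs.isUnit, mul_one]

theorem rpow_star_mul_self_add_one (hz : IsUnit z) (r : ℝ) :
    (star z * z) ^ (r + 1) = star z * (z * star z) ^ r * z := by
  have hpos : IsStrictlyPositive (star z * z) :=
    CStarAlgebra.isStrictlyPositive_iff_eq_star_mul_self.2 ⟨z, hz, rfl⟩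
  obtain ⟨u, hu⟩ := exists_unitary_mul_abs hz
  have habs : CFC.abs z = (star z * z) ^ (1 / 2 : ℝ) := sqrt_eq_rpow
  have huz : star (u : 𝓐) * z = CFC.abs z := by
    nth_rewrite 1 [hu]
    rw [← mul_assoc, Unitary.coe_star_mul_self, one_mul]
  have hzu : star z * (u : 𝓐) = CFC.abs z := by
    rw [← (CFC.abs_nonneg z).star_eq, ← huz, star_mul, star_star]
  have hconj : u * (star z * z) * star (u : 𝓐) = z * star z := by
    calc u * (star z * z) * star (u : 𝓐)
        = (u * CFC.abs z) * star (u * CFC.abs z) := by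
          simp only [← CFC.abs_mul_abs, star_mul, (CFC.abs_nonneg z).star_eq, mul_assoc]
      _ = z * star z := by rw [← hu]
  calc (star z * z) ^ (r + 1)
      = CFC.abs z * (star z * z) ^ r * CFC.abs z := by
        rw [habs, ← rpow_add hpos.isUnit, ← rpow_add hpos.isUnit]
        ring_nf
    _ = (star z * u) * (star z * z) ^ r * (star (u : 𝓐) * z) := by rw [hzu, huz]
    _ = star z * (u * (star z * z) ^ r * star (u : 𝓐)) * z := by simp only [mul_assoc]
    _ = star z * (z * star z) ^ r * z := by rw [unitary_conj_rpow u hpos, hconj]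

/-! ### The geometric mean and the near order -/

/-- The metric geometric mean `a ♯ b = a^{1/2} (a^{-1/2} b a^{-1/2})^{1/2} a^{1/2}`. -/
def geomMean (a b : 𝓐) : 𝓐 :=
  conjSqrt a (sqrt (conjSqrt a⁻¹ʳ b))

/-- The near order `a ⪯ b`, meaning `1 ≤ a⁻¹ ♯ b`. It is not transitive, hence not registered as an
order instance. -/
def IsNearLE (a b : 𝓐) : Prop :=
  1 ≤ geomMean a⁻¹ʳ b

theorem isStrictlyPositive_geomMean (ha : IsStrictlyPositive a) (hb : IsStrictlyPositive b) :
    IsStrictlyPositive (geomMean a b) :=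
  (isStrictlyPositive_conjSqrt_iff a _).2
    ((isStrictlyPositive_conjSqrt_iff a⁻¹ʳ b ha.ringInverse).2 hb).sqrt

theorem conjSqrt_geomMean_ringInverse (ha : IsStrictlyPositive a) (b : 𝓐) :
    conjSqrt a (geomMean a⁻¹ʳ b) = sqrt (conjSqrt a b) := by
  rw [geomMean, inverse_inverse ha.isUnit, conjSqrt_conjSqrt_ringInverse a]

theorem geomMean_ringInverse_conj (ha : IsStrictlyPositive a) (hb : 0 ≤ b) :
    geomMean a⁻¹ʳ b * a * geomMean a⁻¹ʳ b = b := by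
  apply conjSqrt_injective ha
  rw [conjSqrt_conj ha.nonneg, conjSqrt_geomMean_ringInverse ha,
    sqrt_mul_sqrt_self _ (conjSqrt_nonneg a hb)]

theorem le_geomMean_ringInverse (ha : IsStrictlyPositive a) (hy : 0 ≤ y) (h : y * a * y ≤ b) :
    y ≤ geomMean a⁻¹ʳ b := by
  have hsq : conjSqrt a y * conjSqrt a y ≤ conjSqrt a b :=
    conjSqrt_conj ha.nonneg y ▸ conjSqrt_monotone h
  have hle : conjSqrt a y ≤ conjSqrt a (geomMean a⁻¹ʳ b) := by
    rw [conjSqrt_geomMean_ringInverse ha, ← sqrt_mul_self (conjSqrt a y) (conjSqrt_nonneg a hy)]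
    exact sqrt_le_sqrt _ _ hsq
  simpa only [conjSqrt_ringInverse_conjSqrt a _ ha] using conjSqrt_monotone (c := a⁻¹ʳ) hle

theorem isNearLE_of_conj_le (ha : IsStrictlyPositive a) (hy : 1 ≤ y) (h : y * a * y ≤ b) :
    IsNearLE a b :=
  hy.trans (le_geomMean_ringInverse ha (zero_le_one.trans hy) h)

theorem IsNearLE.exists_conj_eq (h : IsNearLE a b) (ha : IsStrictlyPositive a) (hb : 0 ≤ b) :
    ∃ y, 1 ≤ y ∧ y * a * y = b :=
  ⟨_, h, geomMean_ringInverse_conj ha hb⟩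

theorem isNearLE_of_le (ha : IsStrictlyPositive a) (h : a ≤ b) : IsNearLE a b :=
  isNearLE_of_conj_le ha le_rfl (by rwa [one_mul, mul_one])

theorem IsNearLE.ringInverse (h : IsNearLE a b) (ha : IsStrictlyPositive a)
    (hb : IsStrictlyPositive b) : IsNearLE b⁻¹ʳ a⁻¹ʳ := by
  obtain ⟨y, hy, rfl⟩ := h.exists_conj_eq ha hb.nonneg
  refine isNearLE_of_conj_le hb.ringInverse hy (le_of_eq ?_)
  lift y to 𝓐ˣ using (IsStrictlyPositive.of_le isStrictlyPositive_one hy).isUnit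
  lift a to 𝓐ˣ using ha.isUnit
  simp only [← Units.val_mul, Ring.inverse_unit]
  congr 1
  group

theorem isNearLE_of_forall_smul (ha : IsStrictlyPositive a) (hb : 0 ≤ b)
    (h : ∀ c : ℝ, 0 < c → c < 1 → IsNearLE (c • a) b) : IsNearLE a b := by
  have hsqrt (c : ℝ) (hc₀ : 0 < c) (hc₁ : c < 1) : √c • (1 : 𝓐) ≤ geomMean a⁻¹ʳ b := by
    obtain ⟨y, hy, hyb⟩ := (h c hc₀ hc₁).exists_conj_eq (ha.smul hc₀) hb
    have hconj : (√c • y) * a * (√c • y) = b := by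
      simp only [← hyb, smul_mul_assoc, mul_smul_comm, smul_smul, Real.mul_self_sqrt hc₀.le]
    have hy₀ : 0 ≤ √c • y := smul_nonneg (Real.sqrt_nonneg c) (zero_le_one.trans hy)
    calc √c • (1 : 𝓐) ≤ √c • y := smul_le_smul_of_nonneg_left hy (Real.sqrt_nonneg c)
      _ ≤ geomMean a⁻¹ʳ b := le_geomMean_ringInverse ha hy₀ hconj.le
  have hlim : Tendsto (fun c : ℝ => √c • (1 : 𝓐)) (𝓝[<] 1) (𝓝 1) := by
    have hcont : Continuous fun c : ℝ => √c • (1 : 𝓐) := by fun_prop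
    simpa using (hcont.tendsto 1).mono_left nhdsWithin_le_nhds
  refine le_of_tendsto hlim ?_
  filter_upwards [Ioo_mem_nhdsLT (zero_lt_one' ℝ)] with c hc using hsqrt c hc.1 hc.2

/-! ### Powers -/

theorem one_le_mul_self_of_one_le (hy : 1 ≤ y) : 1 ≤ y * y := by
  have hd : 0 ≤ y - 1 := sub_nonneg.2 hy
  calc (1 : 𝓐) ≤ 1 + ((y - 1) + (y - 1) + (y - 1) * (y - 1)) :=
        le_add_of_nonneg_right (add_nonneg (add_nonneg hd hd) hd.isSelfAdjoint.mul_self_nonneg)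
    _ = y * y := by noncomm_ring

theorem IsNearLE.rpow_of_le_two (h : IsNearLE a b) (ha : IsStrictlyPositive a)
    (hb : IsStrictlyPositive b) {p : ℝ} (hp₁ : 1 ≤ p) (hp₂ : p ≤ 2) :
    IsNearLE (a ^ p) (b ^ p) := by
  obtain ⟨y, hy, rfl⟩ := h.exists_conj_eq ha hb.nonneg
  have hy_pos : IsStrictlyPositive y := .of_le isStrictlyPositive_one hy
  set z := sqrt a * y with hz
  have hz_star : star z = y * sqrt a := by
    rw [hz, star_mul, hy_pos.isSelfAdjoint.star_eq, ha.sqrt.isSelfAdjoint.star_eq]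
  have hz_unit : IsUnit z := ha.sqrt.isUnit.mul hy_pos.isUnit
  have hstar_mul : star z * z = y * a * y := by
    calc star z * z = y * (sqrt a * sqrt a) * y := by
          rw [hz_star, hz]
          simp only [mul_assoc]
      _ = y * a * y := by rw [sqrt_mul_sqrt_self a]
  have ha_le : a ≤ z * star z := by
    calc a = conjSqrt a 1 := (conjSqrt_one a).symm
      _ ≤ conjSqrt a (y * y) := conjSqrt_monotone (one_le_mul_self_of_one_le hy)
      _ = z * star z := by
          rw [hz_star, hz, conjSqrt_apply]
          simp only [mul_assoc]
  have ha_rpow : a ^ p = sqrt a * a ^ (p - 1) * sqrt a := by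
    rw [sqrt_eq_rpow, ← rpow_add ha.isUnit, ← rpow_add ha.isUnit]
    ring_nf
  refine isNearLE_of_conj_le (ha.rpow _ _) hy ?_
  calc y * a ^ p * y = star z * a ^ (p - 1) * z := by
        rw [ha_rpow, hz_star, hz]
        simp only [mul_assoc]
    _ ≤ star z * (z * star z) ^ (p - 1) * z :=
        star_left_conjugate_le_conjugate (rpow_le_rpow ⟨by linarith, by linarith⟩ ha_le) z
    _ = (y * a * y) ^ p := by
        rw [← rpow_star_mul_self_add_one hz_unit, sub_add_cancel, hstar_mul]

theorem IsNearLE.rpow (h : IsNearLE a b) (ha : IsStrictlyPositive a) (hb : IsStrictlyPositive b)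
    {p : ℝ} (hp : 1 ≤ p) : IsNearLE (a ^ p) (b ^ p) := by
  obtain ⟨k, hk⟩ := pow_unbounded_of_one_lt p one_lt_two
  induction k generalizing p with
  | zero => exact absurd hk (by simpa using hp)
  | succ k ih =>
    obtain hp₂ | hp₂ := le_or_gt p 2
    · exact h.rpow_of_le_two ha hb hp hp₂
    have hhalf : IsNearLE (a ^ (p / 2)) (b ^ (p / 2)) :=
      ih (by linarith) (by rw [pow_succ] at hk; linarith)
    have hdouble := hhalf.rpow_of_le_two (ha.rpow _ _) (hb.rpow _ _) one_le_two le_rfl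
    have hp_ne : p / 2 ≠ 0 := by positivity
    rwa [rpow_rpow a _ _ hp_ne, rpow_rpow b _ _ hp_ne, div_mul_cancel₀ p two_ne_zero] at hdouble

/-! ### Comparison of logarithms -/

theorem continuousOn_rpow_sub_one_spectrum (ha : IsStrictlyPositive a) (q : ℝ) :
    ContinuousOn (fun x : ℝ => x ^ q - 1) (spectrum ℝ a) :=
  (continuousOn_rpow_spectrum ha q).sub continuousOn_const

theorem cfc_inv_mul_rpow_sub_one (ha : IsStrictlyPositive a) (q : ℝ) :
    cfc (fun x : ℝ => q⁻¹ * (x ^ q - 1)) a = q⁻¹ • (a ^ q - 1) := by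
  rw [cfc_const_mul _ _ a (continuousOn_rpow_sub_one_spectrum ha q),
    cfc_sub _ _ a (continuousOn_rpow_spectrum ha q) continuousOn_const, cfc_const_one ℝ a,
    rpow_eq_cfc_real ha.nonneg]

theorem log_le_inv_smul_rpow_sub_one (ha : IsStrictlyPositive a) {q : ℝ} (hq : 0 < q) :
    CFC.log a ≤ q⁻¹ • (a ^ q - 1) := by
  rw [← cfc_inv_mul_rpow_sub_one ha]
  refine cfc_mono (fun x hx => ?_)
    (Real.continuousOn_log.mono fun x hx => (ha.spectrum_pos hx).ne')
    ((continuousOn_rpow_sub_one_spectrum ha q).const_smul q⁻¹)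
  have hx₀ : 0 < x := ha.spectrum_pos hx
  rw [le_inv_mul_iff₀ hq, ← Real.log_rpow hx₀]
  exact Real.log_le_sub_one_of_pos (Real.rpow_pos_of_pos hx₀ q)

theorem eventually_inv_smul_rpow_sub_one_le (ha : IsStrictlyPositive a) {δ : ℝ} (hδ : 0 < δ) :
    ∀ᶠ q : ℝ in 𝓝[>] 0, q⁻¹ • (a ^ q - 1) ≤ CFC.log a + algebraMap ℝ 𝓐 δ := by
  filter_upwards [(tendsto_cfc_rpow_sub_one_log ha).eventually (Metric.closedBall_mem_nhds _ hδ)]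
    with q hdist
  rw [← cfc_inv_mul_rpow_sub_one ha, ← sub_le_iff_le_add']
  refine (IsSelfAdjoint.le_algebraMap_norm_self
    (IsSelfAdjoint.sub (cfc_predicate _ a) IsSelfAdjoint.log)).trans (algebraMap_mono 𝓐 ?_)
  rwa [← dist_eq_norm]

theorem eventually_rpow_le_rpow_of_log_add_le_log (ha : IsStrictlyPositive a)
    (hb : IsStrictlyPositive b) {δ : ℝ} (hδ : 0 < δ)
    (h : CFC.log a + algebraMap ℝ 𝓐 δ ≤ CFC.log b) : ∀ᶠ q : ℝ in 𝓝[>] 0, a ^ q ≤ b ^ q := by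
  filter_upwards [eventually_inv_smul_rpow_sub_one_le ha hδ, self_mem_nhdsWithin]
    with q hqa (hq : 0 < q)
  have hle : q⁻¹ • (a ^ q - 1) ≤ q⁻¹ • (b ^ q - 1) :=
    hqa.trans (h.trans (log_le_inv_smul_rpow_sub_one hb hq))
  exact (sub_le_sub_iff_right 1).1 ((smul_le_smul_iff_of_pos_left (inv_pos.2 hq)).1 hle)

theorem isNearLE_rpow_of_log_add_le_log (ha : IsStrictlyPositive a) (hb : IsStrictlyPositive b)
    {δ : ℝ} (hδ : 0 < δ) (h : CFC.log a + algebraMap ℝ 𝓐 δ ≤ CFC.log b) {p : ℝ} (hp : 0 < p) :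
    IsNearLE (a ^ p) (b ^ p) := by
  obtain ⟨q, hq_le, hq₀, hqp⟩ := ((eventually_rpow_le_rpow_of_log_add_le_log ha hb hδ h).and
    (Ioc_mem_nhdsGT hp)).exists
  have hnear : IsNearLE ((a ^ q) ^ (p / q)) ((b ^ q) ^ (p / q)) :=
    (isNearLE_of_le (ha.rpow _ _) hq_le).rpow (ha.rpow _ _) (hb.rpow _ _) ((one_le_div hq₀).2 hqp)
  rwa [rpow_rpow a _ _ hq₀.ne', rpow_rpow b _ _ hq₀.ne', mul_div_cancel₀ p hq₀.ne'] at hnear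

theorem isNearLE_rpow_of_log_le_log (ha : IsStrictlyPositive a) (hb : IsStrictlyPositive b)
    (h : CFC.log a ≤ CFC.log b) {p : ℝ} (hp : 0 ≤ p) : IsNearLE (a ^ p) (b ^ p) := by
  obtain rfl | hp := hp.eq_or_lt
  · rw [rpow_zero a, rpow_zero b]
    exact isNearLE_of_le isStrictlyPositive_one le_rfl
  refine isNearLE_of_forall_smul (ha.rpow _ _) (hb.rpow _ _).nonneg fun c hc₀ hc₁ => ?_
  set d := c ^ p⁻¹ with hd
  have hd₀ : 0 < d := Real.rpow_pos_of_pos hc₀ _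
  have hd₁ : d < 1 := Real.rpow_lt_one hc₀.le hc₁ (inv_pos.2 hp)
  have hlog : CFC.log (d • a) + algebraMap ℝ 𝓐 (-Real.log d) ≤ CFC.log b := by
    rwa [CFC.log_smul' a hd₀, add_right_comm, ← map_add, add_neg_cancel, map_zero, zero_add]
  have hnear := isNearLE_rpow_of_log_add_le_log (ha.smul hd₀) hb
    (neg_pos.2 (Real.log_neg hd₀ hd₁)) hlog hp
  rwa [smul_rpow ha hd₀, hd, Real.rpow_inv_rpow hc₀.le hp.ne'] at hnear

theorem isNearLE_rpow (ha : IsStrictlyPositive a) (hb : IsStrictlyPositive b) {p : ℝ}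
    (h : (IsNearLE a b ∧ 1 ≤ p) ∨ (a ≤ b ∧ 0 ≤ p) ∨ (CFC.log a ≤ CFC.log b ∧ 0 ≤ p)) :
    IsNearLE (a ^ p) (b ^ p) := by
  obtain ⟨hnear, hp⟩ | ⟨hle, hp⟩ | ⟨hlog, hp⟩ := h
  · exact hnear.rpow ha hb hp
  · exact isNearLE_rpow_of_log_le_log ha hb (CFC.log_le_log hle) hp
  · exact isNearLE_rpow_of_log_le_log ha hb hlog hp

/-! ### Monotone curves -/

/-- The Wasserstein mean `a ◇ₜ b = ((1 - t) + t (a⁻¹ ♯ b)) a ((1 - t) + t (a⁻¹ ♯ b))`. -/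
def wassersteinMean (a b : 𝓐) (t : ℝ) : 𝓐 :=
  ((1 - t) • 1 + t • geomMean a⁻¹ʳ b) * a * ((1 - t) • 1 + t • geomMean a⁻¹ʳ b)

/-- The spectral geometric mean `a ♮ₜ b = (a⁻¹ ♯ b)^t a (a⁻¹ ♯ b)^t`. -/
def spectralGeomMean (a b : 𝓐) (t : ℝ) : 𝓐 :=
  geomMean a⁻¹ʳ b ^ t * a * geomMean a⁻¹ʳ b ^ t

theorem isStrictlyPositive_cfc_conj (ha : IsStrictlyPositive a) (hg : IsSelfAdjoint g) {f : ℝ → ℝ}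
    (hf : ContinuousOn f (spectrum ℝ g)) (hf_pos : ∀ x ∈ spectrum ℝ g, 0 < f x) :
    IsStrictlyPositive (cfc f g * a * cfc f g) :=
  have hfg : IsStrictlyPositive (cfc f g) := (cfc_isStrictlyPositive_iff f g).2 hf_pos
  .conjugate_of_isUnit_of_isSelfAdjoint a _ hfg.isUnit hfg.isSelfAdjoint ha

theorem isNearLE_cfc_conj (ha : IsStrictlyPositive a) (hg : IsSelfAdjoint g) {f h : ℝ → ℝ}
    (hf : ContinuousOn f (spectrum ℝ g)) (hh : ContinuousOn h (spectrum ℝ g))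
    (hf_pos : ∀ x ∈ spectrum ℝ g, 0 < f x) (hfh : ∀ x ∈ spectrum ℝ g, f x ≤ h x) :
    IsNearLE (cfc f g * a * cfc f g) (cfc h g * a * cfc h g) := by
  have hf_ne : ∀ x ∈ spectrum ℝ g, f x ≠ 0 := fun x hx => (hf_pos x hx).ne'
  have hratio : ContinuousOn (fun x => h x / f x) (spectrum ℝ g) := hh.div hf hf_ne
  set y := cfc (fun x => h x / f x) g
  have hy : 1 ≤ y := one_le_cfc _ g fun x hx => (one_le_div (hf_pos x hx)).2 (hfh x hx)
  have hyf : y * cfc f g = cfc h g := by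
    rw [← cfc_mul _ _ g hratio hf]
    exact cfc_congr fun x hx => div_mul_cancel₀ _ (hf_ne x hx)
  have hfy : cfc f g * y = cfc h g := (cfc_commute_cfc f _ g).eq.trans hyf
  refine isNearLE_of_conj_le (isStrictlyPositive_cfc_conj ha hg hf hf_pos) hy (le_of_eq ?_)
  calc y * (cfc f g * a * cfc f g) * y = (y * cfc f g) * a * (cfc f g * y) := by
        simp only [mul_assoc]
    _ = cfc h g * a * cfc h g := by rw [hyf, hfy]

theorem wassersteinMean_eq_cfc_conj (hg : IsSelfAdjoint (geomMean a⁻¹ʳ b)) (t : ℝ) :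
    wassersteinMean a b t = cfc (fun x : ℝ => 1 - t + t * x) (geomMean a⁻¹ʳ b) * a *
      cfc (fun x : ℝ => 1 - t + t * x) (geomMean a⁻¹ʳ b) := by
  rw [wassersteinMean, cfc_one_sub_add_mul hg]

theorem IsNearLE.isStrictlyPositive_wassersteinMean (h : IsNearLE a b)
    (ha : IsStrictlyPositive a) {t : ℝ} (ht : 0 ≤ t) :
    IsStrictlyPositive (wassersteinMean a b t) := by
  have hg : IsSelfAdjoint (geomMean a⁻¹ʳ b) :=
    (IsStrictlyPositive.of_le isStrictlyPositive_one h).isSelfAdjoint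
  rw [wassersteinMean_eq_cfc_conj hg]
  refine isStrictlyPositive_cfc_conj ha hg (by fun_prop) fun x hx => ?_
  nlinarith [(CFC.one_le_iff _ hg).1 h x hx]

theorem IsNearLE.wassersteinMean_mono (h : IsNearLE a b) (ha : IsStrictlyPositive a) {t s : ℝ}
    (ht : 0 ≤ t) (hts : t ≤ s) : IsNearLE (wassersteinMean a b t) (wassersteinMean a b s) := by
  have hg : IsSelfAdjoint (geomMean a⁻¹ʳ b) :=
    (IsStrictlyPositive.of_le isStrictlyPositive_one h).isSelfAdjoint
  have hspec : ∀ x ∈ spectrum ℝ (geomMean a⁻¹ʳ b), 1 ≤ x := (CFC.one_le_iff _ hg).1 h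
  rw [wassersteinMean_eq_cfc_conj hg, wassersteinMean_eq_cfc_conj hg]
  exact isNearLE_cfc_conj ha hg (by fun_prop) (by fun_prop)
    (fun x hx => by nlinarith [hspec x hx]) fun x hx => by nlinarith [hspec x hx]

theorem isStrictlyPositive_spectralGeomMean (ha : IsStrictlyPositive a)
    (hb : IsStrictlyPositive b) (t : ℝ) : IsStrictlyPositive (spectralGeomMean a b t) :=
  have hgt : IsStrictlyPositive (geomMean a⁻¹ʳ b ^ t) :=
    (isStrictlyPositive_geomMean ha.ringInverse hb).rpow _ t
  .conjugate_of_isUnit_of_isSelfAdjoint a _ hgt.isUnit hgt.isSelfAdjoint ha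

theorem IsNearLE.spectralGeomMean_mono (h : IsNearLE a b) (ha : IsStrictlyPositive a) {t s : ℝ}
    (hts : t ≤ s) : IsNearLE (spectralGeomMean a b t) (spectralGeomMean a b s) := by
  have hg : IsStrictlyPositive (geomMean a⁻¹ʳ b) := .of_le isStrictlyPositive_one h
  have hspec : ∀ x ∈ spectrum ℝ (geomMean a⁻¹ʳ b), 1 ≤ x :=
    (CFC.one_le_iff _ hg.isSelfAdjoint).1 h
  simp only [spectralGeomMean, rpow_eq_cfc_real hg.nonneg]
  exact isNearLE_cfc_conj ha hg.isSelfAdjoint (continuousOn_rpow_spectrum hg t)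
    (continuousOn_rpow_spectrum hg s) (fun x hx => Real.rpow_pos_of_pos (hg.spectrum_pos hx) t)
    fun x hx => Real.rpow_le_rpow_of_exponent_le (hspec x hx) hts

theorem power_near_order_and_monotone_curves_general (ha : IsStrictlyPositive a)
    (hb : IsStrictlyPositive b) {p : ℝ}
    (h : (IsNearLE a b ∧ 1 ≤ p) ∨ (a ≤ b ∧ 0 ≤ p) ∨ (CFC.log a ≤ CFC.log b ∧ 0 ≤ p)) :
    IsNearLE (a ^ p) (b ^ p) ∧
    IsNearLE (b ^ (-p)) (a ^ (-p)) ∧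
    (∀ t s : ℝ, 0 ≤ t → t < s →
      IsNearLE (wassersteinMean (a ^ p) (b ^ p) t) (wassersteinMean (a ^ p) (b ^ p) s)) ∧
    (∀ t s : ℝ, 0 ≤ t → t < s →
      IsNearLE (wassersteinMean (b ^ (-p)) (a ^ (-p)) t)
        (wassersteinMean (b ^ (-p)) (a ^ (-p)) s)) ∧
    (∀ t s : ℝ, t < s →
      IsNearLE (spectralGeomMean (a ^ p) (b ^ p) t) (spectralGeomMean (a ^ p) (b ^ p) s)) := by
  have hnear : IsNearLE (a ^ p) (b ^ p) := isNearLE_rpow ha hb h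
  have hnear_neg : IsNearLE (b ^ (-p)) (a ^ (-p)) := by
    simpa only [ringInverse_rpow ha, ringInverse_rpow hb] using
      hnear.ringInverse (ha.rpow _ _) (hb.rpow _ _)
  exact ⟨hnear, hnear_neg,
    fun _ _ ht hts => hnear.wassersteinMean_mono (ha.rpow _ _) ht hts.le,
    fun _ _ ht hts => hnear_neg.wassersteinMean_mono (hb.rpow _ _) ht hts.le,
    fun _ _ hts => hnear.spectralGeomMean_mono (ha.rpow _ _) hts.le⟩

end CStarAlgebra

section Matrix

open CFC Ring
open scoped MatrixOrder Matrix.Norms.L2Operator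

variable {n : ℕ} {A B : Matrix (Fin n) (Fin n) ℂ}

theorem mpow_eq_rpow (hA : 0 ≤ A) (t : ℝ) : mpow A t = A ^ t :=
  (rpow_eq_cfc_real hA).symm

theorem gmean_half_eq_geomMean (hA : IsStrictlyPositive A) (hB : 0 ≤ B) :
    gmean A B (1 / 2) = geomMean A B := by
  have hinv : sqrt A⁻¹ʳ = mpow A (-(1 / 2)) := by
    rw [sqrt_ringInverse hA, mpow_eq_rpow hA.nonneg]
  have hsqrt : sqrt A = mpow A (1 / 2) := by rw [sqrt_eq_rpow, mpow_eq_rpow hA.nonneg]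
  have hmid : 0 ≤ conjSqrt A⁻¹ʳ B := conjSqrt_nonneg _ hB
  rw [geomMean, sqrt_eq_rpow, ← mpow_eq_rpow hmid, gmean, conjSqrt_apply, conjSqrt_apply, hinv,
    hsqrt]

theorem gmean_inv_half_eq_geomMean (hA : IsStrictlyPositive A) (hB : 0 ≤ B) :
    gmean A⁻¹ B (1 / 2) = geomMean A⁻¹ʳ B := by
  rw [Matrix.nonsing_inv_eq_ringInverse, gmean_half_eq_geomMean hA.ringInverse hB]

theorem nearLE_iff_isNearLE (hA : IsStrictlyPositive A) (hB : 0 ≤ B) :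
    NearLE A B ↔ IsNearLE A B := by
  rw [NearLE, gmean_inv_half_eq_geomMean hA hB]
  exact Matrix.le_iff.symm

theorem wmean_eq_wassersteinMean (hA : IsStrictlyPositive A) (hB : 0 ≤ B) (t : ℝ) :
    wmean A B t = wassersteinMean A B t := by
  simp only [wmean, wassersteinMean, gmean_inv_half_eq_geomMean hA hB, Complex.coe_smul]

theorem smean_eq_spectralGeomMean (hA : IsStrictlyPositive A) (hB : IsStrictlyPositive B)
    (t : ℝ) : smean A B t = spectralGeomMean A B t := by
  rw [smean, spectralGeomMean, gmean_inv_half_eq_geomMean hA hB.nonneg,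
    mpow_eq_rpow (isStrictlyPositive_geomMean hA.ringInverse hB).nonneg]

theorem IsNearLE.nearLE_wmean_iff (h : IsNearLE A B) (hA : IsStrictlyPositive A)
    (hB : 0 ≤ B) {t s : ℝ} (ht : 0 ≤ t) (hs : 0 ≤ s) :
    NearLE (wmean A B t) (wmean A B s) ↔
      IsNearLE (wassersteinMean A B t) (wassersteinMean A B s) := by
  rw [wmean_eq_wassersteinMean hA hB, wmean_eq_wassersteinMean hA hB,
    nearLE_iff_isNearLE (h.isStrictlyPositive_wassersteinMean hA ht)
      (h.isStrictlyPositive_wassersteinMean hA hs).nonneg]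

theorem nearLE_smean_iff (hA : IsStrictlyPositive A) (hB : IsStrictlyPositive B) (t s : ℝ) :
    NearLE (smean A B t) (smean A B s) ↔
      IsNearLE (spectralGeomMean A B t) (spectralGeomMean A B s) := by
  rw [smean_eq_spectralGeomMean hA hB, smean_eq_spectralGeomMean hA hB,
    nearLE_iff_isNearLE (isStrictlyPositive_spectralGeomMean hA hB t)
      (isStrictlyPositive_spectralGeomMean hA hB s).nonneg]

end Matrix

/-- if (`A ⪯ B` and `p ≥ 1`) or (`A ≤ B` and `p ≥ 0`) or
(`log A ≤ log B` and `p ≥ 0`), then `Aᵖ ⪯ Bᵖ`, `B⁻ᵖ ⪯ A⁻ᵖ`, and the curves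
`t ↦ Aᵖ ◇ₜ Bᵖ` (on `t ≥ 0`), `t ↦ B⁻ᵖ ◇ₜ A⁻ᵖ` (on `t ≥ 0`) and `t ↦ Aᵖ ♮ₜ Bᵖ`
(on `t ∈ ℝ`) are monotonically increasing in the near order. -/
theorem power_near_order_and_monotone_curves {n : ℕ} (A B : Matrix (Fin n) (Fin n) ℂ)
    (hA : A.PosDef) (hB : B.PosDef) (p : ℝ)
    (hyp : (NearLE A B ∧ 1 ≤ p) ∨ (LoewnerLE A B ∧ 0 ≤ p) ∨
      (LoewnerLE (mlog A) (mlog B) ∧ 0 ≤ p)) :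
    NearLE (mpow A p) (mpow B p) ∧
    NearLE (mpow B (-p)) (mpow A (-p)) ∧
    (∀ t s : ℝ, 0 ≤ t → t < s →
      NearLE (wmean (mpow A p) (mpow B p) t) (wmean (mpow A p) (mpow B p) s)) ∧
    (∀ t s : ℝ, 0 ≤ t → t < s →
      NearLE (wmean (mpow B (-p)) (mpow A (-p)) t) (wmean (mpow B (-p)) (mpow A (-p)) s)) ∧
    (∀ t s : ℝ, t < s →
      NearLE (smean (mpow A p) (mpow B p) t) (smean (mpow A p) (mpow B p) s)) := by
  open scoped MatrixOrder Matrix.Norms.L2Operator in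
  have ha := hA.isStrictlyPositive
  have hb := hB.isStrictlyPositive
  obtain ⟨hpow, hinv, hw, hw_inv, hs⟩ := power_near_order_and_monotone_curves_general ha hb
    (hyp.imp_left (And.imp_left (nearLE_iff_isNearLE ha hb.nonneg).1))
  have hap (q : ℝ) : IsStrictlyPositive (A ^ q) := ha.rpow _ _
  have hbp (q : ℝ) : IsStrictlyPositive (B ^ q) := hb.rpow _ _
  simp only [mpow_eq_rpow ha.nonneg, mpow_eq_rpow hb.nonneg]
  exact ⟨(nearLE_iff_isNearLE (hap p) (hbp p).nonneg).2 hpow,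
    (nearLE_iff_isNearLE (hbp (-p)) (hap (-p)).nonneg).2 hinv,
    fun t s ht hts =>
      (hpow.nearLE_wmean_iff (hap p) (hbp p).nonneg ht (ht.trans hts.le)).2 (hw t s ht hts),
    fun t s ht hts =>
      (hinv.nearLE_wmean_iff (hbp (-p)) (hap (-p)).nonneg ht (ht.trans hts.le)).2
        (hw_inv t s ht hts),
    fun t s hts => (nearLE_smean_iff (hap p) (hbp p) t s).2 (hs t s hts)⟩
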